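/- Let x^∞ be a sequence over a finite alphabet 𝒳. Then the limits lim_{k→∞} liminf_{n→∞} (1/k) Ĥ^k(x^n) and lim_{k→∞} limsup_{n→∞} (1/k) Ĥ^k(x^n) exist, and they satisfy ρ̲(x^∞) = lim_{k→∞} liminf_{n→∞} (1/k) Ĥ^k(x^n) and ρ̄(x^∞) = lim_{k→∞} limsup_{n→∞} (1/k) Ĥ^k(x^n). That is, best-case and worst-case compressibility may be computed using block-by-block empirical entropies in place of sliding-window empirical entropies. -/

import Mathlib

open Filter

/-- Base-2 Shannon entropy of a finitely-supported distribution given as a function. -/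
noncomputable def ent2 {β : Type*} [Fintype β] (q : β → ℝ) : ℝ :=
  ∑ b, -(q b * Real.logb 2 (q b))

/-- The `k`-th order block-by-block empirical distribution of `x^n`: the fraction of the
`⌊n/k⌋` disjoint `k`-blocks of `x^n` equal to a given word `w`. -/
noncomputable def blockDist {𝒳 : Type*} [DecidableEq 𝒳] (x : ℕ → 𝒳) (k n : ℕ)
    (w : Fin k → 𝒳) : ℝ :=
  (((Finset.range (n / k)).filter
      (fun i => (fun j : Fin k => x (k * i + (j : ℕ))) = w)).card : ℝ) / ((n / k : ℕ) : ℝ)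

/-- The `k`-th order block-by-block empirical entropy `Ĥ^k(x^n)` (base 2). -/
noncomputable def Hblock {𝒳 : Type*} [Fintype 𝒳] [DecidableEq 𝒳] (x : ℕ → 𝒳) (k n : ℕ) : ℝ :=
  ent2 (blockDist x k n)

/-- The `k`-th order sliding-window empirical distribution of `x^n`: the fraction of the
`n−k+1` length-`k` windows of `x^n` equal to a given word `w`. -/
noncomputable def swDist {𝒳 : Type*} [DecidableEq 𝒳] (x : ℕ → 𝒳) (k n : ℕ)
    (w : Fin k → 𝒳) : ℝ :=
  (((Finset.range (n - k + 1)).filter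
      (fun i => (fun j : Fin k => x (i + (j : ℕ))) = w)).card : ℝ) / ((n - k + 1 : ℕ) : ℝ)

/-- The `k`-th order sliding-window empirical entropy `Ĥ^k_sw(x^n)` (base 2). -/
noncomputable def Hsw {𝒳 : Type*} [Fintype 𝒳] [DecidableEq 𝒳] (x : ℕ → 𝒳) (k n : ℕ) : ℝ :=
  ent2 (swDist x k n)


/-!
The entropy of an empirical distribution is the least average code length achieved by any
probability distribution on the words observed. A `K`-word can be described by parsing it into
consecutive `k`-words in one of `k` phases, each encoded by an ideal code for `k`-words. Beyond the
`k`-words themselves this costs an overhead `C k`, which does not depend on `K`.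

Let the phase of each `K`-window be aligned with the blocks of the whole sequence: its `k`-words are
then `k`-blocks, and each `k`-block occurs in at most `K` windows. This bounds the sliding-window
rate of order `K` by `C k / K` plus the block rate of order `k`. Conversely, parse all `K`-blocks in
the same phase and average over the `k` phases: each `k`-window is then used at most once, which
bounds the block rate of order `K` by `C k / K` plus the sliding-window rate of order `k`. Both
bounds carry a factor that tends to `1` as `n → ∞`. Letting first `n`, then `K` and then `k` tend to
infinity shows that the two rates converge to the same limit.
-/

section Gibbs

lemma neg_mul_logb_le {a b : ℝ} (ha : 0 ≤ a) (hb : 0 ≤ b) (hab : b = 0 → a = 0) :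
    -(a * Real.logb 2 a) ≤ a * -Real.logb 2 b + (b - a) / Real.log 2 := by
  have hlog2 : 0 < Real.log 2 := Real.log_pos one_lt_two
  rcases ha.eq_or_lt with rfl | ha
  · simpa using div_nonneg hb hlog2.le
  have hb : 0 < b := hb.lt_of_ne' (mt hab ha.ne')
  have hlog : a * (Real.log b - Real.log a) ≤ b - a := by
    have h := mul_le_mul_of_nonneg_left (Real.log_le_sub_one_of_pos (div_pos hb ha)) ha.le
    rwa [Real.log_div hb.ne' ha.ne', mul_sub_one, mul_div_cancel₀ _ ha.ne'] at h
  have := div_le_div_of_nonneg_right hlog hlog2.le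
  simp only [Real.logb]
  linear_combination this

variable {β : Type*} [Fintype β]

lemma ent2_le_sum_mul_neg_logb {p q : β → ℝ} (hp : 0 ≤ p) (hq : 0 ≤ q)
    (hqp : ∑ b, q b ≤ ∑ b, p b) (h0 : ∀ b, q b = 0 → p b = 0) :
    ent2 p ≤ ∑ b, p b * -Real.logb 2 (q b) := by
  calc ent2 p ≤ ∑ b, (p b * -Real.logb 2 (q b) + (q b - p b) / Real.log 2) :=
        Finset.sum_le_sum fun b _ => neg_mul_logb_le (hp b) (hq b) (h0 b)
    _ = ∑ b, p b * -Real.logb 2 (q b) + (∑ b, q b - ∑ b, p b) / Real.log 2 := by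
        rw [Finset.sum_add_distrib, ← Finset.sum_div, Finset.sum_sub_distrib]
    _ ≤ ∑ b, p b * -Real.logb 2 (q b) :=
        add_le_of_nonpos_right <| div_nonpos_of_nonpos_of_nonneg (sub_nonpos.2 hqp)
          (Real.log_nonneg one_le_two)

lemma uniform_mem_stdSimplex [Nonempty β] :
    (fun _ => (Fintype.card β : ℝ)⁻¹) ∈ stdSimplex ℝ β :=
  ⟨fun _ => by positivity, by simp⟩

lemma average_mem_stdSimplex {P : Type*} [Fintype P] [Nonempty P] {Q : P → β → ℝ}
    (hQ : ∀ p, Q p ∈ stdSimplex ℝ β) :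
    ∑ p, (Fintype.card P : ℝ)⁻¹ • Q p ∈ stdSimplex ℝ β :=
  (convex_stdSimplex ℝ β).sum_mem (fun _ _ => by positivity) (by simp) fun p _ => hQ p

end Gibbs

section Empirical

open Finset

variable {ι β : Type*} [DecidableEq β]

/-- The empirical distribution of the family `f` on the index set `s`, as a weight function. It
vanishes identically when `s` is empty. -/
noncomputable def empDist (s : Finset ι) (f : ι → β) (b : β) : ℝ :=
  #{i ∈ s | f i = b} / #s

/-- The information content, in bits, of the observation `f i` under the empirical distribution
of `f` on `s`. -/
noncomputable def surprisal (s : Finset ι) (f : ι → β) (i : ι) : ℝ :=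
  -Real.logb 2 (empDist s f (f i))

lemma empDist_nonneg (s : Finset ι) (f : ι → β) (b : β) : 0 ≤ empDist s f b := by
  unfold empDist; positivity

lemma empDist_le_one (s : Finset ι) (f : ι → β) (b : β) : empDist s f b ≤ 1 :=
  div_le_one_of_le₀ (by exact_mod_cast card_filter_le _ _) (by positivity)

lemma empDist_pos_iff {s : Finset ι} {f : ι → β} {b : β} :
    0 < empDist s f b ↔ ∃ i ∈ s, f i = b := by
  rw [(empDist_nonneg s f b).lt_iff_ne', empDist, div_ne_zero_iff, Nat.cast_ne_zero,
    Nat.cast_ne_zero, card_ne_zero, card_ne_zero, filter_nonempty_iff]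
  exact and_iff_left_of_imp fun ⟨i, hi, _⟩ => ⟨i, hi⟩

lemma empDist_image {κ : Type*} [DecidableEq ι] {e : κ → ι} (he : e.Injective) (s : Finset κ)
    (f : ι → β) : empDist (s.image e) f = empDist s (f ∘ e) := by
  ext b
  simp only [empDist, filter_image, card_image_of_injective _ he, Function.comp_apply]

lemma surprisal_nonneg (s : Finset ι) (f : ι → β) (i : ι) : 0 ≤ surprisal s f i :=
  neg_nonneg.2 <|
    Real.logb_nonpos one_lt_two (empDist_nonneg s f _) (empDist_le_one s f _)

variable [Fintype β]

lemma sum_comp_eq_card_mul_sum_empDist (s : Finset ι) (f : ι → β) (g : β → ℝ) :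
    ∑ i ∈ s, g (f i) = #s * ∑ b, empDist s f b * g b := by
  rcases s.eq_empty_or_nonempty with rfl | hs
  · simp
  have hs' : (#s : ℝ) ≠ 0 := by simpa using hs.ne_empty
  calc ∑ i ∈ s, g (f i) = ∑ b, #{i ∈ s | f i = b} * g b := by
        rw [← sum_fiberwise' s f g]; simp
    _ = #s * ∑ b, empDist s f b * g b := by
        simp only [mul_sum, empDist, ← mul_assoc, mul_div_cancel₀ _ hs']

lemma sum_empDist {s : Finset ι} (hs : s.Nonempty) (f : ι → β) : ∑ b, empDist s f b = 1 := by
  simpa [hs.ne_empty] using sum_comp_eq_card_mul_sum_empDist s f 1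

lemma empDist_mem_stdSimplex {s : Finset ι} (hs : s.Nonempty) (f : ι → β) :
    empDist s f ∈ stdSimplex ℝ β :=
  ⟨empDist_nonneg s f, sum_empDist hs f⟩

lemma sum_surprisal (s : Finset ι) (f : ι → β) :
    ∑ i ∈ s, surprisal s f i = #s * ent2 (empDist s f) :=
  (sum_comp_eq_card_mul_sum_empDist s f fun b => -Real.logb 2 (empDist s f b)).trans <| by
    simp [ent2]

lemma card_mul_ent2_empDist_le_sum {s : Finset ι} {f : ι → β} {q : β → ℝ}
    (hq : q ∈ stdSimplex ℝ β) (hpos : ∀ i ∈ s, 0 < q (f i)) :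
    #s * ent2 (empDist s f) ≤ ∑ i ∈ s, -Real.logb 2 (q (f i)) := by
  rcases s.eq_empty_or_nonempty with rfl | hs
  · simp
  have h0 : ∀ b, q b = 0 → empDist s f b = 0 := fun b hb => by
    by_contra h
    obtain ⟨i, hi, rfl⟩ := empDist_pos_iff.1 ((empDist_nonneg s f b).lt_of_ne' h)
    exact (hpos i hi).ne' hb
  rw [sum_comp_eq_card_mul_sum_empDist s f fun b => -Real.logb 2 (q b)]
  exact mul_le_mul_of_nonneg_left (ent2_le_sum_mul_neg_logb (empDist_nonneg s f) hq.1
    (hq.2.trans (sum_empDist hs f).symm).le h0) (Nat.cast_nonneg _)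

/-- A code that first announces its own label `φ i` pays `log |P|` bits for the announcement. -/
lemma card_mul_ent2_empDist_le_sum_of_labels {P : Type*} [Fintype P] {s : Finset ι} {f : ι → β}
    {Q : P → β → ℝ} (hQ : ∀ p, Q p ∈ stdSimplex ℝ β) (φ : ι → P)
    (hpos : ∀ i ∈ s, 0 < Q (φ i) (f i)) :
    #s * ent2 (empDist s f) ≤
      #s * Real.logb 2 (Fintype.card P) + ∑ i ∈ s, -Real.logb 2 (Q (φ i) (f i)) := by
  rcases s.eq_empty_or_nonempty with rfl | ⟨i₀, -⟩
  · simp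
  have : Nonempty P := ⟨φ i₀⟩
  have hP : (0 : ℝ) < (Fintype.card P : ℝ)⁻¹ := by positivity
  set A : β → ℝ := ∑ p, (Fintype.card P : ℝ)⁻¹ • Q p
  have hA : ∀ p b, (Fintype.card P : ℝ)⁻¹ * Q p b ≤ A b := fun p b => by
    simpa [A] using single_le_sum (f := fun p => (Fintype.card P : ℝ)⁻¹ * Q p b)
      (fun p _ => mul_nonneg hP.le ((hQ p).1 b)) (mem_univ p)
  refine (card_mul_ent2_empDist_le_sum (average_mem_stdSimplex hQ) fun i hi =>
    (mul_pos hP (hpos i hi)).trans_le (hA _ _)).trans ?_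
  rw [← nsmul_eq_mul, ← sum_const, ← sum_add_distrib]
  refine sum_le_sum fun i hi => ?_
  have := Real.logb_le_logb_of_le one_lt_two (mul_pos hP (hpos i hi)) (hA (φ i) (f i))
  rw [Real.logb_mul hP.ne' (hpos i hi).ne', Real.logb_inv] at this
  linarith

lemma ent2_empDist_nonneg (s : Finset ι) (f : ι → β) : 0 ≤ ent2 (empDist s f) :=
  sum_nonneg fun b _ => neg_nonneg.2 <| mul_nonpos_of_nonneg_of_nonpos (empDist_nonneg s f b) <|
    Real.logb_nonpos one_lt_two (empDist_nonneg s f b) (empDist_le_one s f b)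

lemma ent2_empDist_le_logb_card [Nonempty β] (s : Finset ι) (f : ι → β) :
    ent2 (empDist s f) ≤ Real.logb 2 (Fintype.card β) := by
  rcases s.eq_empty_or_nonempty with rfl | hs
  · simpa [ent2, empDist] using
      Real.logb_nonneg one_lt_two (Nat.one_le_cast.2 (Fintype.card_pos (α := β)))
  have h := card_mul_ent2_empDist_le_sum (s := s) (f := f) uniform_mem_stdSimplex
    fun _ _ => by positivity
  rw [sum_const, nsmul_eq_mul, Real.logb_inv, neg_neg] at h
  exact le_of_mul_le_mul_left h (by simpa using hs)

end Empirical

section Parsing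

open Finset

/-- The word of length `k` of the sequence `x` that starts at position `i`. -/
def word {𝒳 : Type*} (x : ℕ → 𝒳) (k i : ℕ) : Fin k → 𝒳 := fun j => x (i + j)

/-- The positions `d` in phase `p`, i.e. `d ≡ p` modulo `k`, at which a word of length `k` starts
inside a word of length `n`. Because of the truncated subtraction it is only meaningful for
`k ≤ n`. -/
def wordStarts {k : ℕ} (n : ℕ) (p : ZMod k) : Finset ℕ := {d ∈ range (n - k + 1) | (d : ZMod k) = p}

lemma mem_wordStarts {k n d : ℕ} {p : ZMod k} :
    d ∈ wordStarts n p ↔ d < n - k + 1 ∧ (d : ZMod k) = p := by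
  simp [wordStarts]

lemma add_mul_left_injective (a : ℕ) {k : ℕ} (hk : k ≠ 0) : (fun s => a + k * s).Injective :=
  fun _ _ h => Nat.eq_of_mul_eq_mul_left (Nat.pos_of_ne_zero hk) (Nat.add_left_cancel h)

lemma wordStarts_eq_image {k n : ℕ} [NeZero k] (hkn : k ≤ n) (p : ZMod k) :
    wordStarts n p = (range ((n - p.val) / k)).image fun s => p.val + k * s := by
  have hk : 0 < k := Nat.pos_of_neZero k
  have hp : p.val < k := p.val_lt
  have hfit (s : ℕ) : s < (n - p.val) / k ↔ p.val + k * s < n - k + 1 := by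
    rw [← Nat.succ_le_iff, Nat.le_div_iff_mul_le hk, Nat.succ_mul, mul_comm s k]
    omega
  ext d
  simp only [mem_wordStarts, mem_image, mem_range, hfit]
  constructor
  · rintro ⟨hd, rfl⟩
    have hd' : (d : ZMod k).val + k * (d / k) = d := by
      rw [ZMod.val_natCast, Nat.mod_add_div]
    exact ⟨d / k, by rwa [hd'], hd'⟩
  · rintro ⟨s, hs, rfl⟩
    exact ⟨hs, by simp⟩

variable {𝒳 : Type*} [Fintype 𝒳]

/-- A family of weights `c x i` that depend only on the word of length `L` of `x` at position `i`
and form a probability distribution on those words. Working with positions instead of words avoids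
splitting and casting `Fin`-indexed tuples. -/
def IsWordDist (L : ℕ) (c : (ℕ → 𝒳) → ℕ → ℝ) : Prop :=
  ∃ Q ∈ stdSimplex ℝ (Fin L → 𝒳), ∀ x i, c x i = Q (word x L i)

lemma isWordDist_of_mem_stdSimplex {k : ℕ} {q : (Fin k → 𝒳) → ℝ} (hq : q ∈ stdSimplex ℝ _) :
    IsWordDist k fun x i => q (word x k i) :=
  ⟨q, hq, fun _ _ => rfl⟩

lemma isWordDist_uniform [Nonempty 𝒳] (L : ℕ) :
    IsWordDist L fun (_ : ℕ → 𝒳) _ => ((Fintype.card 𝒳 : ℝ) ^ L)⁻¹ := by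
  simpa using isWordDist_of_mem_stdSimplex (uniform_mem_stdSimplex (β := Fin L → 𝒳))

lemma IsWordDist.append {a b : ℕ} {c d : (ℕ → 𝒳) → ℕ → ℝ} (hc : IsWordDist a c)
    (hd : IsWordDist b d) : IsWordDist (a + b) fun x i => c x i * d x (i + a) := by
  obtain ⟨Q, hQ, hcQ⟩ := hc
  obtain ⟨R, hR, hdR⟩ := hd
  refine ⟨fun w => Q (fun j => w (Fin.castAdd b j)) * R (fun j => w (Fin.natAdd a j)),
    ⟨fun w => mul_nonneg (hQ.1 _) (hR.1 _), ?_⟩, fun x i => ?_⟩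
  · rw [← (Fin.appendEquiv a b).sum_comp]
    simp only [Fin.appendEquiv, Equiv.coe_fn_mk, Fin.append_left, Fin.append_right]
    rw [Fintype.sum_prod_type, ← Fintype.sum_mul_sum, hQ.2, hR.2, one_mul]
  · have hword : word x b (i + a) = fun j => word x (a + b) i (Fin.natAdd a j) := by
      ext j; simp only [word, Fin.val_natAdd, add_assoc]
    simp only [hcQ, hdR, hword]
    rfl

lemma IsWordDist.prod_range {k : ℕ} {c : (ℕ → 𝒳) → ℕ → ℝ} (hc : IsWordDist k c) (m : ℕ) :
    IsWordDist (k * m) fun x i => ∏ s ∈ range m, c x (i + k * s) := by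
  induction m with
  | zero => exact ⟨fun _ => 1, ⟨fun _ => zero_le_one, by simp⟩, fun _ _ => by simp⟩
  | succ m ih =>
    simp only [prod_range_succ]
    exact ih.append hc

/-- Parse a word of length `L` into `k`-words in phase `p`, weighted by `q`; the fewer than `2 k`
letters before the first and after the last of them are weighted uniformly. -/
lemma exists_isWordDist_parsing [Nonempty 𝒳] {k L : ℕ} [NeZero k] (hkL : k ≤ L) (p : ZMod k)
    {q : (Fin k → 𝒳) → ℝ} (hq : q ∈ stdSimplex ℝ _) :
    ∃ e ≤ 2 * k, IsWordDist L fun x i =>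
      ((Fintype.card 𝒳 : ℝ) ^ e)⁻¹ * ∏ d ∈ wordStarts L p, q (word x k (i + d)) := by
  set m := (L - p.val) / k
  set r := (L - p.val) % k
  have hp : p.val < k := p.val_lt
  have hr : r < k := Nat.mod_lt _ (Nat.pos_of_neZero k)
  have hL : p.val + (k * m + r) = L := by rw [Nat.div_add_mod]; omega
  have h := (isWordDist_uniform p.val).append
    (((isWordDist_of_mem_stdSimplex hq).prod_range m).append (isWordDist_uniform r))
  rw [hL] at h
  refine ⟨p.val + r, by omega, ?_⟩
  convert h using 3
  rw [wordStarts_eq_image hkL, prod_image (add_mul_left_injective _ (NeZero.ne k)).injOn,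
    pow_add, mul_inv]
  simp only [add_assoc]
  ring

/-- The cost, in bits, of describing a long word by its parsing into `k`-words beyond the cost of
these `k`-words themselves: naming the phase of the parsing and spelling out the fewer than `2 k`
letters that it leaves uncovered. -/
noncomputable def parsingOverhead (𝒳 : Type*) [Fintype 𝒳] (k : ℕ) : ℝ :=
  Real.logb 2 k + 2 * k * Real.logb 2 (Fintype.card 𝒳)

lemma logb_card_nonneg (𝒳 : Type*) [Fintype 𝒳] [Nonempty 𝒳] :
    0 ≤ Real.logb 2 (Fintype.card 𝒳) :=
  Real.logb_nonneg one_lt_two (Nat.one_le_cast.2 Fintype.card_pos)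

lemma exists_mem_stdSimplex_neg_logb_le_parsing [Nonempty 𝒳] {k L : ℕ} [NeZero k] (hkL : k ≤ L)
    (p : ZMod k) {q : (Fin k → 𝒳) → ℝ} (hq : q ∈ stdSimplex ℝ _) :
    ∃ Q ∈ stdSimplex ℝ (Fin L → 𝒳), ∀ x i, (∀ d ∈ wordStarts L p, 0 < q (word x k (i + d))) →
      0 < Q (word x L i) ∧ -Real.logb 2 (Q (word x L i)) ≤
        2 * k * Real.logb 2 (Fintype.card 𝒳) +
          ∑ d ∈ wordStarts L p, -Real.logb 2 (q (word x k (i + d))) := by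
  obtain ⟨e, he, Q, hQ, hQw⟩ := exists_isWordDist_parsing hkL p hq
  refine ⟨Q, hQ, fun x i hpos => ?_⟩
  have hprod := prod_pos hpos
  have hcard : (0 : ℝ) < ((Fintype.card 𝒳 : ℝ) ^ e)⁻¹ := by positivity
  rw [← hQw]
  refine ⟨mul_pos hcard hprod, ?_⟩
  rw [Real.logb_mul hcard.ne' hprod.ne', Real.logb_inv, Real.logb_pow,
    Real.logb_prod _ _ fun d hd => (hpos d hd).ne', sum_neg_distrib, neg_add, neg_neg]
  gcongr
  · exact logb_card_nonneg 𝒳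
  · exact_mod_cast he

/-- Parse each word `word x K t` in the phase `φ t` and encode the resulting `k`-words with an
ideal code for the `k`-words that start in `T`. -/
lemma card_mul_ent2_empDist_word_le [DecidableEq 𝒳] [Nonempty 𝒳] (x : ℕ → 𝒳) {k K : ℕ} [NeZero k]
    (hkK : k ≤ K) {S T : Finset ℕ} (hT : T.Nonempty) (φ : ℕ → ZMod k)
    (hST : ∀ t ∈ S, ∀ d ∈ wordStarts K (φ t), t + d ∈ T) :
    #S * ent2 (empDist S (word x K)) ≤ #S * parsingOverhead 𝒳 k +
      ∑ t ∈ S, ∑ d ∈ wordStarts K (φ t), surprisal T (word x k) (t + d) := by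
  choose Q hQ hQx using fun p : ZMod k =>
    exists_mem_stdSimplex_neg_logb_le_parsing hkK p (empDist_mem_stdSimplex hT (word x k))
  have hcost : ∀ t ∈ S, 0 < Q (φ t) (word x K t) ∧ -Real.logb 2 (Q (φ t) (word x K t)) ≤
      2 * k * Real.logb 2 (Fintype.card 𝒳) +
        ∑ d ∈ wordStarts K (φ t), surprisal T (word x k) (t + d) := fun t ht =>
    hQx (φ t) x t fun d hd => empDist_pos_iff.2 ⟨t + d, hST t ht d hd, rfl⟩
  calc #S * ent2 (empDist S (word x K))
      ≤ #S * Real.logb 2 k + ∑ t ∈ S, -Real.logb 2 (Q (φ t) (word x K t)) := by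
        simpa only [ZMod.card] using
          card_mul_ent2_empDist_le_sum_of_labels hQ φ fun t ht => (hcost t ht).1
    _ ≤ #S * Real.logb 2 k + ∑ t ∈ S, (2 * k * Real.logb 2 (Fintype.card 𝒳) +
          ∑ d ∈ wordStarts K (φ t), surprisal T (word x k) (t + d)) := by
        gcongr with t ht
        exact (hcost t ht).2
    _ = #S * parsingOverhead 𝒳 k +
          ∑ t ∈ S, ∑ d ∈ wordStarts K (φ t), surprisal T (word x k) (t + d) := by
        rw [sum_add_distrib, sum_const, nsmul_eq_mul, parsingOverhead]
        ring

end Parsing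

section Counting

open Finset

lemma sum_comp_le_sum_of_injOn {ι κ M : Type*} [AddCommMonoid M] [PartialOrder M]
    [IsOrderedAddMonoid M] {s : Finset ι} {t : Finset κ} {e : ι → κ} {g : κ → M}
    (he : Set.MapsTo e s t) (hinj : Set.InjOn e s) (hg : ∀ b ∈ t, 0 ≤ g b) :
    ∑ a ∈ s, g (e a) ≤ ∑ b ∈ t, g b := by
  classical
  rw [← sum_image hinj]
  exact sum_le_sum_of_subset_of_nonneg (image_subset_iff.2 he) fun b hb _ => hg b hb

lemma card_wordStarts_zero {k n : ℕ} [NeZero k] (hkn : k ≤ n) :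
    #(wordStarts n (0 : ZMod k)) = n / k := by
  rw [wordStarts_eq_image hkn, card_image_of_injective _ (add_mul_left_injective _ (NeZero.ne k)),
    card_range, ZMod.val_zero, Nat.sub_zero]

lemma add_mem_wordStarts_zero {k K n t d : ℕ} (hkK : k ≤ K) (hKn : K ≤ n)
    (ht : t ∈ range (n - K + 1)) (hd : d ∈ wordStarts K (-t : ZMod k)) :
    t + d ∈ wordStarts n (0 : ZMod k) := by
  rw [mem_range] at ht
  rw [mem_wordStarts] at hd ⊢
  exact ⟨by omega, by simp [hd.2]⟩

/-- A position is at distance `d` from the start of only one window, and there are at most `K`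
values of `d`. -/
lemma sum_wordStarts_neg_le_mul_sum {k K n : ℕ} [NeZero k] (hkK : k ≤ K) (hKn : K ≤ n)
    {g : ℕ → ℝ} (hg : 0 ≤ g) :
    ∑ t ∈ range (n - K + 1), ∑ d ∈ wordStarts K (-t : ZMod k), g (t + d) ≤
      K * ∑ i ∈ wordStarts n (0 : ZMod k), g i := by
  calc ∑ t ∈ range (n - K + 1), ∑ d ∈ wordStarts K (-t : ZMod k), g (t + d)
      = ∑ d ∈ range (K - k + 1), ∑ t ∈ range (n - K + 1) with (d : ZMod k) = -(t : ℕ),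
          g (t + d) := sum_comm' fun _ _ => by
          simp only [mem_wordStarts, mem_filter, mem_range]; tauto
    _ ≤ ∑ _d ∈ range (K - k + 1), ∑ i ∈ wordStarts n (0 : ZMod k), g i :=
        sum_le_sum fun d hd => sum_comp_le_sum_of_injOn (e := (· + d))
          (fun t ht => add_mem_wordStarts_zero hkK hKn (mem_filter.1 ht).1 <|
            mem_wordStarts.2 ⟨mem_range.1 hd, (mem_filter.1 ht).2⟩)
          (add_left_injective d).injOn fun i _ => hg i
    _ = (K - k + 1 : ℕ) * ∑ i ∈ wordStarts n (0 : ZMod k), g i := by simp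
    _ ≤ K * ∑ i ∈ wordStarts n (0 : ZMod k), g i := by
        have := NeZero.pos k
        gcongr
        · exact sum_nonneg fun i _ => hg i
        · omega

lemma add_mem_range_of_mem_wordStarts_zero {k K n t d : ℕ} (hkK : k ≤ K) (hKn : K ≤ n)
    (ht : t ∈ wordStarts n (0 : ZMod K)) (hd : d < K - k + 1) : t + d ∈ range (n - k + 1) := by
  rw [mem_wordStarts] at ht
  rw [mem_range]
  omega

/-- The phases partition the positions of the `k`-words in a block, and the blocks are disjoint. -/
lemma sum_phases_sum_wordStarts_le_sum {k K n : ℕ} [NeZero k] (hkK : k ≤ K) (hKn : K ≤ n)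
    {g : ℕ → ℝ} (hg : 0 ≤ g) :
    ∑ p : ZMod k, ∑ t ∈ wordStarts n (0 : ZMod K), ∑ d ∈ wordStarts K p, g (t + d) ≤
      ∑ i ∈ range (n - k + 1), g i := by
  have hk := NeZero.pos k
  calc ∑ p : ZMod k, ∑ t ∈ wordStarts n (0 : ZMod K), ∑ d ∈ wordStarts K p, g (t + d)
      = ∑ t ∈ wordStarts n (0 : ZMod K), ∑ d ∈ range (K - k + 1), g (t + d) := by
        rw [sum_comm]
        exact sum_congr rfl fun t _ => sum_fiberwise _ _ _
    _ = ∑ c ∈ wordStarts n (0 : ZMod K) ×ˢ range (K - k + 1), g (c.1 + c.2) :=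
        (sum_product' _ _ fun t d => g (t + d)).symm
    _ ≤ ∑ i ∈ range (n - k + 1), g i := by
        refine sum_comp_le_sum_of_injOn (e := fun c : ℕ × ℕ => c.1 + c.2) ?_ ?_ fun i _ => hg i
        · rintro ⟨t, d⟩ h
          simp only [coe_product, Set.mem_prod, mem_coe, mem_range] at h
          exact add_mem_range_of_mem_wordStarts_zero hkK hKn h.1 h.2
        · rintro ⟨t, d⟩ h ⟨t', d'⟩ h' heq
          simp only [coe_product, Set.mem_prod, mem_coe, mem_range, mem_wordStarts,
            ZMod.natCast_eq_zero_iff] at h h' heq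
          have hmod := congrArg (· % K) heq
          simp only [Nat.add_mod, Nat.mod_eq_zero_of_dvd h.1.2, Nat.mod_eq_zero_of_dvd h'.1.2,
            zero_add, Nat.mod_mod] at hmod
          rw [Nat.mod_eq_of_lt (by omega), Nat.mod_eq_of_lt (by omega)] at hmod
          rw [Prod.mk.injEq]
          omega

end Counting

section Comparison

open Finset

variable {𝒳 : Type*} [Fintype 𝒳] [DecidableEq 𝒳]

lemma Hsw_eq_ent2_empDist (x : ℕ → 𝒳) (k n : ℕ) :
    Hsw x k n = ent2 (empDist (range (n - k + 1)) (word x k)) := by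
  unfold Hsw
  congr 1
  ext w
  simp only [swDist, empDist, card_range]
  rfl

lemma Hblock_eq_ent2_empDist_range (x : ℕ → 𝒳) (k n : ℕ) :
    Hblock x k n = ent2 (empDist (range (n / k)) fun s => word x k (k * s)) := by
  unfold Hblock
  congr 1
  ext w
  simp only [blockDist, empDist, card_range]
  rfl

lemma Hblock_eq_ent2_empDist_wordStarts (x : ℕ → 𝒳) {k n : ℕ} [NeZero k] (hkn : k ≤ n) :
    Hblock x k n = ent2 (empDist (wordStarts n (0 : ZMod k)) (word x k)) := by
  rw [wordStarts_eq_image hkn, empDist_image (add_mul_left_injective _ (NeZero.ne k)),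
    Hblock_eq_ent2_empDist_range]
  simp only [ZMod.val_zero, Nat.sub_zero, zero_add, Function.comp_def]

lemma Hsw_nonneg (x : ℕ → 𝒳) (k n : ℕ) : 0 ≤ Hsw x k n := by
  rw [Hsw_eq_ent2_empDist]
  exact ent2_empDist_nonneg _ _

lemma Hblock_nonneg (x : ℕ → 𝒳) (k n : ℕ) : 0 ≤ Hblock x k n := by
  rw [Hblock_eq_ent2_empDist_range]
  exact ent2_empDist_nonneg _ _

variable [Nonempty 𝒳]

lemma mul_Hsw_le (x : ℕ → 𝒳) {k K n : ℕ} [NeZero k] (hkK : k ≤ K) (hKn : K ≤ n) :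
    (n - K + 1 : ℕ) * Hsw x K n ≤
      (n - K + 1 : ℕ) * parsingOverhead 𝒳 k + K * ((n / k : ℕ) * Hblock x k n) := by
  have hkn := hkK.trans hKn
  have hT : (wordStarts n (0 : ZMod k)).Nonempty := by
    rw [← card_pos, card_wordStarts_zero hkn]
    exact Nat.div_pos hkn (NeZero.pos k)
  have hparse := card_mul_ent2_empDist_word_le x hkK hT (fun t => -t) fun t ht d hd =>
    add_mem_wordStarts_zero hkK hKn ht hd
  have hcount := sum_wordStarts_neg_le_mul_sum hkK hKn
    (surprisal_nonneg (wordStarts n (0 : ZMod k)) (word x k))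
  rw [sum_surprisal, card_wordStarts_zero hkn, ← Hblock_eq_ent2_empDist_wordStarts x hkn] at hcount
  rw [card_range, ← Hsw_eq_ent2_empDist] at hparse
  exact hparse.trans (add_le_add_right hcount _)

lemma mul_Hblock_le (x : ℕ → 𝒳) {k K n : ℕ} [NeZero k] (hkK : k ≤ K) (hKn : K ≤ n) :
    k * ((n / K : ℕ) * Hblock x K n) ≤
      k * ((n / K : ℕ) * parsingOverhead 𝒳 k) + (n - k + 1 : ℕ) * Hsw x k n := by
  have : NeZero K := ⟨((NeZero.pos k).trans_le hkK).ne'⟩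
  have hparse (p : ZMod k) := card_mul_ent2_empDist_word_le x hkK
    (nonempty_range_iff.2 (Nat.succ_ne_zero (n - k))) (fun _ => p)
    fun t ht d hd => add_mem_range_of_mem_wordStarts_zero hkK hKn ht (mem_wordStarts.1 hd).1
  have hcount := sum_phases_sum_wordStarts_le_sum hkK hKn
    (surprisal_nonneg (range (n - k + 1)) (word x k))
  rw [sum_surprisal, card_range, ← Hsw_eq_ent2_empDist] at hcount
  have hsum := sum_le_sum fun p (_ : p ∈ univ) => hparse p
  rw [sum_add_distrib, sum_const, sum_const, card_univ, ZMod.card, nsmul_eq_mul, nsmul_eq_mul,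
    card_wordStarts_zero hKn, ← Hblock_eq_ent2_empDist_wordStarts x hKn] at hsum
  exact hsum.trans (add_le_add_right hcount _)

end Comparison

section Rates

variable {𝒳 : Type*} [Fintype 𝒳] [DecidableEq 𝒳] [Nonempty 𝒳]

lemma one_div_mul_ent2_empDist_mem_Icc {ι : Type*} {k : ℕ} (s : Finset ι) (f : ι → Fin k → 𝒳) :
    1 / (k : ℝ) * ent2 (empDist s f) ∈ Set.Icc 0 (Real.logb 2 (Fintype.card 𝒳)) := by
  refine ⟨mul_nonneg (by positivity) (ent2_empDist_nonneg s f), ?_⟩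
  rcases k.eq_zero_or_pos with rfl | hk
  · simpa using logb_card_nonneg 𝒳
  have h := ent2_empDist_le_logb_card s f
  rw [Fintype.card_pi_const, Nat.cast_pow, Real.logb_pow] at h
  rwa [one_div, inv_mul_le_iff₀ (by positivity)]

lemma Hsw_rate_mem_Icc (x : ℕ → 𝒳) (k n : ℕ) :
    1 / (k : ℝ) * Hsw x k n ∈ Set.Icc 0 (Real.logb 2 (Fintype.card 𝒳)) := by
  rw [Hsw_eq_ent2_empDist]
  exact one_div_mul_ent2_empDist_mem_Icc _ _

lemma Hblock_rate_mem_Icc (x : ℕ → 𝒳) (k n : ℕ) :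
    1 / (k : ℝ) * Hblock x k n ∈ Set.Icc 0 (Real.logb 2 (Fintype.card 𝒳)) := by
  rw [Hblock_eq_ent2_empDist_range]
  exact one_div_mul_ent2_empDist_mem_Icc _ _

lemma Hsw_rate_le (x : ℕ → 𝒳) {k K n : ℕ} (hk : 0 < k) (hkK : k ≤ K) (hKn : K ≤ n) :
    1 / (K : ℝ) * Hsw x K n ≤
      parsingOverhead 𝒳 k / K + n / (n - K + 1 : ℕ) * (1 / (k : ℝ) * Hblock x k n) := by
  have : NeZero k := .of_pos hk
  have hK : 0 < K := hk.trans_le hkK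
  have hH := Hblock_nonneg x k n
  calc 1 / (K : ℝ) * Hsw x K n
      = (n - K + 1 : ℕ) * Hsw x K n / (K * (n - K + 1 : ℕ)) := by field_simp
    _ ≤ ((n - K + 1 : ℕ) * parsingOverhead 𝒳 k + K * ((n / k : ℕ) * Hblock x k n)) /
          (K * (n - K + 1 : ℕ)) := by
        gcongr
        exact mul_Hsw_le x hkK hKn
    _ ≤ ((n - K + 1 : ℕ) * parsingOverhead 𝒳 k + K * (n / k * Hblock x k n)) /
          (K * (n - K + 1 : ℕ)) := by
        gcongr
        exact Nat.cast_div_le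
    _ = parsingOverhead 𝒳 k / K + n / (n - K + 1 : ℕ) * (1 / (k : ℝ) * Hblock x k n) := by
        field_simp

lemma Hblock_rate_le (x : ℕ → 𝒳) {k K n : ℕ} (hk : 0 < k) (hkK : k ≤ K) (hKn : K ≤ n) :
    1 / (K : ℝ) * Hblock x K n ≤
      parsingOverhead 𝒳 k / K + n / (n - K + 1 : ℕ) * (1 / (k : ℝ) * Hsw x k n) := by
  have : NeZero k := .of_pos hk
  have hK : 0 < K := hk.trans_le hkK
  have hH := Hsw_nonneg x k n
  have hM : 0 < n / K := Nat.div_pos hKn hK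
  have hwindows : n - k + 1 ≤ n := by omega
  have hblocks : n - K + 1 ≤ K * (n / K) := by
    have := Nat.lt_mul_div_succ n hK
    rw [Nat.mul_succ] at this
    omega
  calc 1 / (K : ℝ) * Hblock x K n
      = k * ((n / K : ℕ) * Hblock x K n) / (k * (K * (n / K : ℕ))) := by field_simp
    _ ≤ (k * ((n / K : ℕ) * parsingOverhead 𝒳 k) + (n - k + 1 : ℕ) * Hsw x k n) /
          (k * (K * (n / K : ℕ))) := by
        gcongr
        exact mul_Hblock_le x hkK hKn
    _ = parsingOverhead 𝒳 k / K +
          (n - k + 1 : ℕ) / (K * (n / K : ℕ) : ℝ) * (1 / (k : ℝ) * Hsw x k n) := by field_simp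
    _ ≤ parsingOverhead 𝒳 k / K + n / (n - K + 1 : ℕ) * (1 / (k : ℝ) * Hsw x k n) := by
        gcongr
        exact_mod_cast hblocks

end Rates

section Limits

variable {ι : Type*} {f : Filter ι} {u v : ι → ℝ} {D : ℝ}

lemma isBoundedUnder_le_of_mem_Icc (hu : ∀ i, u i ∈ Set.Icc 0 D) :
    IsBoundedUnder (· ≤ ·) f u := isBoundedUnder_of ⟨D, fun i => (hu i).2⟩

lemma isBoundedUnder_ge_of_mem_Icc (hu : ∀ i, u i ∈ Set.Icc 0 D) :
    IsBoundedUnder (· ≥ ·) f u := isBoundedUnder_of ⟨0, fun i => (hu i).1⟩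

section NeBot

variable [f.NeBot]

lemma limsup_mem_Icc (hu : ∀ i, u i ∈ Set.Icc 0 D) : limsup u f ∈ Set.Icc 0 D :=
  ⟨le_limsup_of_frequently_le (.of_forall fun i => (hu i).1) (isBoundedUnder_le_of_mem_Icc hu),
    limsup_le_of_le (isBoundedUnder_ge_of_mem_Icc hu).isCoboundedUnder_le
      (.of_forall fun i => (hu i).2)⟩

lemma liminf_mem_Icc (hu : ∀ i, u i ∈ Set.Icc 0 D) : liminf u f ∈ Set.Icc 0 D :=
  ⟨le_liminf_of_le (isBoundedUnder_le_of_mem_Icc hu).isCoboundedUnder_ge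
      (.of_forall fun i => (hu i).1),
    liminf_le_of_frequently_le (.of_forall fun i => (hu i).2) (isBoundedUnder_ge_of_mem_Icc hu)⟩

variable {a : ι → ℝ} {c : ℝ}

lemma liminf_le_add_liminf_of_le_add_mul (ha : Tendsto a f (nhds 1)) (hu : ∀ i, 0 ≤ u i)
    (hv : ∀ i, v i ∈ Set.Icc 0 D) (h : ∀ᶠ i in f, u i ≤ c + a i * v i) :
    liminf u f ≤ c + liminf v f := by
  have ha0 : 0 ≤ᶠ[f] a := (ha.eventually_const_lt one_pos).mono fun _ => le_of_lt
  have hv0 : 0 ≤ᶠ[f] v := .of_forall fun i => (hv i).1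
  have hav_ge : IsBoundedUnder (· ≥ ·) f (a * v) :=
    isBoundedUnder_of_eventually_ge (ha0.mono fun i hi => mul_nonneg hi (hv i).1)
  have hav_le := isBoundedUnder_le_mul_of_nonneg ha0.frequently ha.isBoundedUnder_le hv0
    (isBoundedUnder_le_of_mem_Icc hv)
  calc liminf u f ≤ liminf (fun i => c + (a * v) i) f :=
        liminf_le_liminf h (isBoundedUnder_of ⟨0, hu⟩)
          (isBoundedUnder_le_add isBoundedUnder_const hav_le).isCoboundedUnder_ge
    _ = c + liminf (a * v) f := liminf_const_add f _ c hav_le.isCoboundedUnder_ge hav_ge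
    _ ≤ c + limsup a f * liminf v f := by
        gcongr
        exact liminf_mul_le ha0 ha.isBoundedUnder_le hv0
          (isBoundedUnder_le_of_mem_Icc hv).isCoboundedUnder_ge
    _ = c + liminf v f := by rw [ha.limsup_eq, one_mul]

lemma limsup_le_add_limsup_of_le_add_mul (ha : Tendsto a f (nhds 1)) (hu : ∀ i, 0 ≤ u i)
    (hv : ∀ i, v i ∈ Set.Icc 0 D) (h : ∀ᶠ i in f, u i ≤ c + a i * v i) :
    limsup u f ≤ c + limsup v f := by
  have ha0 : 0 ≤ᶠ[f] a := (ha.eventually_const_lt one_pos).mono fun _ => le_of_lt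
  have hv0 : 0 ≤ᶠ[f] v := .of_forall fun i => (hv i).1
  have hav_ge : IsBoundedUnder (· ≥ ·) f (a * v) :=
    isBoundedUnder_of_eventually_ge (ha0.mono fun i hi => mul_nonneg hi (hv i).1)
  have hav_le := isBoundedUnder_le_mul_of_nonneg ha0.frequently ha.isBoundedUnder_le hv0
    (isBoundedUnder_le_of_mem_Icc hv)
  calc limsup u f ≤ limsup (fun i => c + (a * v) i) f :=
        limsup_le_limsup h (IsCoboundedUnder.of_frequently_ge (.of_forall hu))
          (isBoundedUnder_le_add isBoundedUnder_const hav_le)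
    _ = c + limsup (a * v) f := limsup_const_add f _ c hav_le hav_ge.isCoboundedUnder_le
    _ ≤ c + limsup a f * limsup v f := by
        gcongr
        exact limsup_mul_le ha0.frequently ha.isBoundedUnder_le hv0
          (isBoundedUnder_le_of_mem_Icc hv)
    _ = c + limsup v f := by rw [ha.limsup_eq, one_mul]

end NeBot

lemma tendsto_natCast_div_sub_add_one (K : ℕ) :
    Tendsto (fun n : ℕ => (n : ℝ) / (n - K + 1 : ℕ)) atTop (nhds 1) := by
  have hsub : Tendsto (fun n : ℕ => n - K + 1) atTop atTop :=
    tendsto_atTop_mono (fun n => Nat.le_succ (n - K)) (tendsto_sub_atTop_nat K)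
  have h : Tendsto (fun n : ℕ => 1 + ((K : ℝ) - 1) / (n - K + 1 : ℕ)) atTop (nhds (1 + 0)) :=
    ((tendsto_const_div_atTop_nhds_zero_nat _).comp hsub).const_add 1
  rw [add_zero] at h
  refine h.congr' ?_
  filter_upwards [eventually_ge_atTop K] with n hn
  rw [one_add_div (by positivity)]
  push_cast [Nat.cast_sub hn]
  ring

lemma limsup_le_liminf_of_forall_le_div_add {u v : ℕ → ℝ} (hu : ∀ k, u k ∈ Set.Icc 0 D)
    (hv : ∀ k, v k ∈ Set.Icc 0 D) {C : ℕ → ℝ}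
    (huv : ∀ k K, 0 < k → k ≤ K → u K ≤ C k / K + v k) :
    limsup u atTop ≤ liminf v atTop := by
  refine le_liminf_of_le (isBoundedUnder_le_of_mem_Icc hv).isCoboundedUnder_ge ?_
  filter_upwards [eventually_gt_atTop 0] with k hk
  have hlim : Tendsto (fun K : ℕ => C k / K + v k) atTop (nhds (0 + v k)) :=
    (tendsto_const_div_atTop_nhds_zero_nat (C k)).add_const (v k)
  rw [zero_add] at hlim
  rw [← hlim.limsup_eq]
  exact limsup_le_limsup ((eventually_ge_atTop k).mono fun K hK => huv k K hk hK)
    (isBoundedUnder_ge_of_mem_Icc hu).isCoboundedUnder_le hlim.isBoundedUnder_le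

lemma exists_tendsto_of_forall_le_div_add {u v : ℕ → ℝ} (hu : ∀ k, u k ∈ Set.Icc 0 D)
    (hv : ∀ k, v k ∈ Set.Icc 0 D) {C : ℕ → ℝ}
    (huv : ∀ k K, 0 < k → k ≤ K → u K ≤ C k / K + v k)
    (hvu : ∀ k K, 0 < k → k ≤ K → v K ≤ C k / K + u k) :
    ∃ ℓ, Tendsto u atTop (nhds ℓ) ∧ Tendsto v atTop (nhds ℓ) := by
  have hu_le := isBoundedUnder_le_of_mem_Icc (f := atTop) hu
  have hu_ge := isBoundedUnder_ge_of_mem_Icc (f := atTop) hu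
  have hv_le := isBoundedUnder_le_of_mem_Icc (f := atTop) hv
  have hv_ge := isBoundedUnder_ge_of_mem_Icc (f := atTop) hv
  have huv' := limsup_le_liminf_of_forall_le_div_add hu hv huv
  have hvu' := limsup_le_liminf_of_forall_le_div_add hv hu hvu
  exact ⟨liminf v atTop,
    tendsto_of_le_liminf_of_limsup_le ((liminf_le_limsup hv_le hv_ge).trans hvu') huv' hu_le hu_ge,
    tendsto_of_le_liminf_of_limsup_le le_rfl
      (hvu'.trans <| (liminf_le_limsup hu_le hu_ge).trans huv') hv_le hv_ge⟩

end Limits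

/-- The paper's Lemma 1: for any sequence over a finite alphabet, the per-symbol
block-by-block empirical entropies converge (in `k`, after taking liminf resp. limsup in
`n`) to the best-case compressibility `ρ̲` resp. the worst-case compressibility `ρ̄`,
which are defined via sliding-window empirical entropies. -/
theorem compressibility_block_eq_sliding {𝒳 : Type*} [Fintype 𝒳] [DecidableEq 𝒳]
    (x : ℕ → 𝒳) :
    Tendsto (fun k : ℕ => liminf (fun n : ℕ => (1 / (k : ℝ)) * Hblock x k n) atTop) atTop
      (nhds (liminf (fun k : ℕ =>
        liminf (fun n : ℕ => (1 / (k : ℝ)) * Hsw x k n) atTop) atTop))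
    ∧ Tendsto (fun k : ℕ => limsup (fun n : ℕ => (1 / (k : ℝ)) * Hblock x k n) atTop) atTop
      (nhds (limsup (fun k : ℕ =>
        limsup (fun n : ℕ => (1 / (k : ℝ)) * Hsw x k n) atTop) atTop)) := by
  have : Nonempty 𝒳 := ⟨x 0⟩
  have hS := Hsw_rate_mem_Icc x
  have hB := Hblock_rate_mem_Icc x
  have hSB (k K : ℕ) (hk : 0 < k) (hkK : k ≤ K) := (eventually_ge_atTop K).mono fun n hKn =>
    Hsw_rate_le x hk hkK hKn
  have hBS (k K : ℕ) (hk : 0 < k) (hkK : k ≤ K) := (eventually_ge_atTop K).mono fun n hKn =>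
    Hblock_rate_le x hk hkK hKn
  have ha := tendsto_natCast_div_sub_add_one
  obtain ⟨ℓ, hSℓ, hBℓ⟩ := exists_tendsto_of_forall_le_div_add
    (fun k => liminf_mem_Icc (f := atTop) (hS k)) (fun k => liminf_mem_Icc (f := atTop) (hB k))
    (fun k K hk hkK => liminf_le_add_liminf_of_le_add_mul (ha K) (fun n => (hS K n).1) (hB k)
      (hSB k K hk hkK))
    (fun k K hk hkK => liminf_le_add_liminf_of_le_add_mul (ha K) (fun n => (hB K n).1) (hS k)
      (hBS k K hk hkK))
  obtain ⟨m, hSm, hBm⟩ := exists_tendsto_of_forall_le_div_add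
    (fun k => limsup_mem_Icc (f := atTop) (hS k)) (fun k => limsup_mem_Icc (f := atTop) (hB k))
    (fun k K hk hkK => limsup_le_add_limsup_of_le_add_mul (ha K) (fun n => (hS K n).1) (hB k)
      (hSB k K hk hkK))
    (fun k K hk hkK => limsup_le_add_limsup_of_le_add_mul (ha K) (fun n => (hB K n).1) (hS k)
      (hBS k K hk hkK))
  exact ⟨hSℓ.liminf_eq.symm ▸ hBℓ, hSm.limsup_eq.symm ▸ hBm⟩
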